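/- The solvable Leibniz algebra R_n is complete: its center is zero, and every derivation of R_n is an inner derivation (a right multiplication operator R_a for some a ∈ R_n); in fact every derivation is a linear combination of R_{f₁},…,R_{f_k}, R_{y₁},…,R_{y_{k+1}}. -/

import Mathlib

noncomputable section

open Finset

/-- Underlying space of `R_n`: basis `e₁,…,e_n`, `f₁,…,f_k`, `y₁,…,y_{k+1}`. -/
abbrev LR (n k : ℕ) := (Fin n ⊕ (Fin k ⊕ Fin (k + 1))) → ℂ

/-- `1`-indexed basis vector `eᵢ` (zero out of range). -/
def Eb (n k : ℕ) (i : ℕ) : LR n k := fun s =>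
  match s with
  | .inl a => if (a : ℕ) + 1 = i then 1 else 0
  | _ => 0

/-- `1`-indexed basis vector `fᵢ` (zero out of range). -/
def Fb (n k : ℕ) (i : ℕ) : LR n k := fun s =>
  match s with
  | .inr (.inl a) => if (a : ℕ) + 1 = i then 1 else 0
  | _ => 0

/-- `1`-indexed basis vector `yᵢ` (zero out of range). -/
def Yb (n k : ℕ) (i : ℕ) : LR n k := fun s =>
  match s with
  | .inr (.inr a) => if (a : ℕ) + 1 = i then 1 else 0
  | _ => 0

/-- Structure constants of `R_n`:
`[eᵢ,f₁] = e_{i+1}` (1 ≤ i ≤ n-k), `[e₁,fᵢ] = e_{n-k+i}` (2 ≤ i ≤ k),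
`[fᵢ,yᵢ] = fᵢ = -[yᵢ,fᵢ]` (1 ≤ i ≤ k), `[eᵢ,y_{k+1}] = eᵢ` (1 ≤ i ≤ n),
`[eᵢ,y₁] = (i-1)eᵢ` (1 ≤ i ≤ n-k+1), `[e_{n-k+i},yᵢ] = e_{n-k+i}` (2 ≤ i ≤ k). -/
def cR (n k : ℕ) :
    (Fin n ⊕ (Fin k ⊕ Fin (k + 1))) → (Fin n ⊕ (Fin k ⊕ Fin (k + 1))) → LR n k
  | .inl a, .inr (.inl b) =>
      (if (b : ℕ) = 0 ∧ (a : ℕ) + 1 ≤ n - k then Eb n k ((a : ℕ) + 2) else 0)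
      + (if (a : ℕ) = 0 ∧ 1 ≤ (b : ℕ) then Eb n k (n - k + (b : ℕ) + 1) else 0)
  | .inr (.inl a), .inr (.inr b) =>
      if (a : ℕ) = (b : ℕ) then Fb n k ((a : ℕ) + 1) else 0
  | .inr (.inr a), .inr (.inl b) =>
      if (a : ℕ) = (b : ℕ) then -Fb n k ((b : ℕ) + 1) else 0
  | .inl a, .inr (.inr b) =>
      (if (b : ℕ) = k then Eb n k ((a : ℕ) + 1) else 0)
      + (if (b : ℕ) = 0 ∧ (a : ℕ) + 1 ≤ n - k + 1 then ((a : ℕ) : ℂ) • Eb n k ((a : ℕ) + 1) else 0)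
      + (if 1 ≤ (b : ℕ) ∧ (b : ℕ) + 1 ≤ k ∧ (a : ℕ) + 1 = n - k + (b : ℕ) + 1
          then Eb n k ((a : ℕ) + 1) else 0)
  | _, _ => 0

/-- Bracket of `R_n`. -/
def brkR (n k : ℕ) (x y : LR n k) : LR n k :=
  ∑ i, ∑ j, (x i * y j) • cR n k i j

/-- coordinate of `e_{i+1}` -/
def ce {n k : ℕ} (x : LR n k) (i : ℕ) : ℂ := if h : i < n then x (.inl ⟨i, h⟩) else 0

/-- coordinate of `f_{i+1}` -/
def cf {n k : ℕ} (x : LR n k) (i : ℕ) : ℂ := if h : i < k then x (.inr (.inl ⟨i, h⟩)) else 0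

/-- coordinate of `y_{i+1}` -/
def cy {n k : ℕ} (x : LR n k) (i : ℕ) : ℂ :=
  if h : i < k + 1 then x (.inr (.inr ⟨i, h⟩)) else 0

theorem LR_ext {n k : ℕ} {x y : LR n k} (h1 : ∀ i < n, ce x i = ce y i)
    (h2 : ∀ i < k, cf x i = cf y i) (h3 : ∀ i < k + 1, cy x i = cy y i) : x = y := by
  funext s
  rcases s with ⟨i, hi⟩ | ⟨i, hi⟩ | ⟨i, hi⟩
  · simpa [ce, hi] using h1 i hi
  · simpa [cf, hi] using h2 i hi
  · simpa [cy, hi] using h3 i hi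

section coords
variable {n k : ℕ}

theorem ce_add (x y : LR n k) (i : ℕ) : ce (x + y) i = ce x i + ce y i := by
  unfold ce; split_ifs <;> simp
theorem cf_add (x y : LR n k) (i : ℕ) : cf (x + y) i = cf x i + cf y i := by
  unfold cf; split_ifs <;> simp
theorem cy_add (x y : LR n k) (i : ℕ) : cy (x + y) i = cy x i + cy y i := by
  unfold cy; split_ifs <;> simp
theorem ce_sub (x y : LR n k) (i : ℕ) : ce (x - y) i = ce x i - ce y i := by
  unfold ce; split_ifs <;> simp
theorem cf_sub (x y : LR n k) (i : ℕ) : cf (x - y) i = cf x i - cf y i := by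
  unfold cf; split_ifs <;> simp
theorem cy_sub (x y : LR n k) (i : ℕ) : cy (x - y) i = cy x i - cy y i := by
  unfold cy; split_ifs <;> simp
theorem ce_neg (x : LR n k) (i : ℕ) : ce (-x) i = -ce x i := by
  unfold ce; split_ifs <;> simp
theorem cf_neg (x : LR n k) (i : ℕ) : cf (-x) i = -cf x i := by
  unfold cf; split_ifs <;> simp
theorem cy_neg (x : LR n k) (i : ℕ) : cy (-x) i = -cy x i := by
  unfold cy; split_ifs <;> simp
theorem ce_zero (i : ℕ) : ce (0 : LR n k) i = 0 := by
  unfold ce; split_ifs <;> simp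
theorem cf_zero (i : ℕ) : cf (0 : LR n k) i = 0 := by
  unfold cf; split_ifs <;> simp
theorem cy_zero (i : ℕ) : cy (0 : LR n k) i = 0 := by
  unfold cy; split_ifs <;> simp
theorem ce_smul (c : ℂ) (x : LR n k) (i : ℕ) : ce (c • x) i = c * ce x i := by
  unfold ce; split_ifs <;> simp
theorem cf_smul (c : ℂ) (x : LR n k) (i : ℕ) : cf (c • x) i = c * cf x i := by
  unfold cf; split_ifs <;> simp
theorem cy_smul (c : ℂ) (x : LR n k) (i : ℕ) : cy (c • x) i = c * cy x i := by
  unfold cy; split_ifs <;> simp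
theorem ce_sum {ι : Type*} (s : Finset ι) (x : ι → LR n k) (i : ℕ) :
    ce (∑ j ∈ s, x j) i = ∑ j ∈ s, ce (x j) i := by
  unfold ce; split_ifs <;> simp
theorem cf_sum {ι : Type*} (s : Finset ι) (x : ι → LR n k) (i : ℕ) :
    cf (∑ j ∈ s, x j) i = ∑ j ∈ s, cf (x j) i := by
  unfold cf; split_ifs <;> simp
theorem cy_sum {ι : Type*} (s : Finset ι) (x : ι → LR n k) (i : ℕ) :
    cy (∑ j ∈ s, x j) i = ∑ j ∈ s, cy (x j) i := by
  unfold cy; split_ifs <;> simp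

theorem ce_Eb (i j : ℕ) : ce (Eb n k (i + 1)) j = if i = j ∧ j < n then 1 else 0 := by
  by_cases h : j < n <;> simp [ce, Eb, h, eq_comm]
theorem cf_Eb (i j : ℕ) : cf (Eb n k i) j = 0 := by simp [cf, Eb]
theorem cy_Eb (i j : ℕ) : cy (Eb n k i) j = 0 := by simp [cy, Eb]
theorem cf_Fb (i j : ℕ) : cf (Fb n k (i + 1)) j = if i = j ∧ j < k then 1 else 0 := by
  by_cases h : j < k <;> simp [cf, Fb, h, eq_comm]
theorem ce_Fb (i j : ℕ) : ce (Fb n k i) j = 0 := by simp [ce, Fb]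
theorem cy_Fb (i j : ℕ) : cy (Fb n k i) j = 0 := by simp [cy, Fb]
theorem cy_Yb (i j : ℕ) : cy (Yb n k (i + 1)) j = if i = j ∧ j < k + 1 then 1 else 0 := by
  by_cases h : j < k + 1 <;> simp [cy, Yb, h, eq_comm]
theorem ce_Yb (i j : ℕ) : ce (Yb n k i) j = 0 := by simp [ce, Yb]
theorem cf_Yb (i j : ℕ) : cf (Yb n k i) j = 0 := by simp [cf, Yb]

theorem sum_fin_ite (N : ℕ) (g : Fin N → ℂ) (j : ℕ) (hj : j < N) :
    (∑ i : Fin N, if (i : ℕ) = j then g i else 0) = g ⟨j, hj⟩ := by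
  rw [Finset.sum_eq_single ⟨j, hj⟩]
  · simp
  · intro b _ hb
    rw [if_neg]
    intro h; exact hb (Fin.ext h)
  · simp

theorem cy_brk (x y : LR n k) (i : ℕ) : cy (brkR n k x y) i = 0 := by
  unfold brkR
  simp only [cy_sum, cy_smul]
  refine Finset.sum_eq_zero fun s _ => Finset.sum_eq_zero fun t _ => ?_
  rcases s with s | s | s <;> rcases t with t | t | t <;> simp only [cR, cy_add, cy_zero, mul_zero] <;>
    (split_ifs <;> simp [cy_zero, cy_Eb, cy_Fb, cy_neg, cy_smul])

theorem cf_brk (x y : LR n k) (i : ℕ) (hi : i < k) :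
    cf (brkR n k x y) i = cf x i * cy y i - cy x i * cf y i := by
  unfold brkR
  simp only [cf_sum, cf_smul, Fintype.sum_sum_type, cR, cf_add, apply_ite (cf · i), cf_Eb, cf_zero,
    cf_neg, cf_Fb, mul_zero, add_zero, ite_self, Finset.sum_const_zero, zero_add]
  have h1 : (∑ a : Fin k, ∑ b : Fin (k + 1), x (.inr (.inl a)) * y (.inr (.inr b)) *
      (if (a : ℕ) = (b : ℕ) then (if (a : ℕ) = i ∧ i < k then (1 : ℂ) else 0) else 0))
      = cf x i * cy y i := by
    have : ∀ a : Fin k, (∑ b : Fin (k + 1), x (.inr (.inl a)) * y (.inr (.inr b)) *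
      (if (a : ℕ) = (b : ℕ) then (if (a : ℕ) = i ∧ i < k then (1 : ℂ) else 0) else 0))
      = if (a : ℕ) = i then x (.inr (.inl a)) * cy y i else 0 := by
      intro a
      by_cases ha : (a : ℕ) = i
      · rw [if_pos ha]
        have := sum_fin_ite (k + 1) (fun b => x (.inr (.inl a)) * y (.inr (.inr b))) i (by omega)
        rw [cy, dif_pos (by omega : i < k + 1), ← this]
        refine Finset.sum_congr rfl fun b _ => ?_
        simp [ha, hi, eq_comm]
      · simp [ha]
    rw [Finset.sum_congr rfl fun a _ => this a, sum_fin_ite k (fun a => x (.inr (.inl a)) * cy y i) i hi]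
    simp [cf, hi]
  have h2 : (∑ a : Fin (k + 1), ∑ b : Fin k, x (.inr (.inr a)) * y (.inr (.inl b)) *
      (if (a : ℕ) = (b : ℕ) then -(if (b : ℕ) = i ∧ i < k then (1 : ℂ) else 0) else 0))
      = - (cy x i * cf y i) := by
    rw [Finset.sum_comm]
    have : ∀ b : Fin k, (∑ a : Fin (k + 1), x (.inr (.inr a)) * y (.inr (.inl b)) *
      (if (a : ℕ) = (b : ℕ) then -(if (b : ℕ) = i ∧ i < k then (1 : ℂ) else 0) else 0))
      = if (b : ℕ) = i then -(cy x i * y (.inr (.inl b))) else 0 := by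
      intro b
      by_cases hb : (b : ℕ) = i
      · rw [if_pos hb]
        have := sum_fin_ite (k + 1) (fun a => -(x (.inr (.inr a)) * y (.inr (.inl b)))) i (by omega)
        rw [cy, dif_pos (by omega : i < k + 1), ← this]
        refine Finset.sum_congr rfl fun a _ => ?_
        simp [hb, hi]
      · simp [hb]
    rw [Finset.sum_congr rfl fun a _ => this a, sum_fin_ite k (fun a => -(cy x i * y (.inr (.inl a)))) i hi]
    simp [cf, hi]
  rw [h1, h2]; ring

/-- the e-coordinate of the bracket -/
theorem ce_brk (x y : LR n k) (i : ℕ) (hi : i < n) (hk : 1 ≤ k) (hn : 2 * k + 2 ≤ n) :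
    ce (brkR n k x y) i = ce x i * cy y k
      + (if i ≤ n - k then (i : ℂ) * ce x i * cy y 0 else ce x i * cy y (i - (n - k)))
      + (if 1 ≤ i ∧ i ≤ n - k then ce x (i - 1) * cf y 0 else 0)
      + (if n - k < i then ce x 0 * cf y (i - (n - k)) else 0) := by
  unfold brkR
  simp only [ce_sum, ce_smul, Fintype.sum_sum_type, cR, ce_add, apply_ite (ce · i), ce_Fb, ce_zero,
    ce_neg, ce_Eb, ce_smul, mul_zero, add_zero, ite_self, Finset.sum_const_zero, zero_add, neg_zero]
  rw [Finset.sum_add_distrib]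
  have hF : (∑ a : Fin n, ∑ b : Fin k, x (.inl a) * y (.inr (.inl b)) *
      ((if (b : ℕ) = 0 ∧ (a : ℕ) + 1 ≤ n - k then (if (a : ℕ) + 1 = i ∧ i < n then (1 : ℂ) else 0) else 0)
      + (if (a : ℕ) = 0 ∧ 1 ≤ (b : ℕ) then (if n - k + (b : ℕ) = i ∧ i < n then (1 : ℂ) else 0) else 0)))
      = (if 1 ≤ i ∧ i ≤ n - k then ce x (i - 1) * cf y 0 else 0)
      + (if n - k < i then ce x 0 * cf y (i - (n - k)) else 0) := by
    simp only [mul_add, Finset.sum_add_distrib]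
    congr 1
    · split_ifs with h
      · rw [Finset.sum_eq_single ⟨i - 1, by omega⟩, Finset.sum_eq_single ⟨0, by omega⟩]
        · have h3 : i - 1 + 1 = i := by omega
          simp [ce, cf, h3, h.2, hi, (by omega : i - 1 < n), (by omega : 0 < k)]
        · intro b _ hb
          have : (b : ℕ) ≠ 0 := fun h => hb (Fin.ext h)
          simp [this]
        · simp
        · intro a _ ha
          have : (a : ℕ) + 1 ≠ i := fun h => ha (Fin.ext (by simp; omega))
          simp [this]
        · simp
      · refine Finset.sum_eq_zero fun a _ => Finset.sum_eq_zero fun b _ => ?_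
        rw [mul_eq_zero]; right
        split_ifs <;> first | rfl | (exfalso; omega)
    · split_ifs with h
      · rw [Finset.sum_eq_single ⟨0, by omega⟩, Finset.sum_eq_single ⟨i - (n - k), by omega⟩]
        · have h3 : n - k + (i - (n - k)) = i := by omega
          simp [ce, cf, h3, hi, (by omega : i - (n - k) < k), (by omega : 0 < n),
            (by omega : 1 ≤ i - (n - k))]
        · intro b _ hb
          have : n - k + (b : ℕ) ≠ i := fun h => hb (Fin.ext (by simp; omega))
          simp [this]
        · simp
        · intro a _ ha
          have : (a : ℕ) ≠ 0 := fun h => ha (Fin.ext h)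
          simp [this]
        · simp
      · refine Finset.sum_eq_zero fun a _ => Finset.sum_eq_zero fun b _ => ?_
        rw [mul_eq_zero]; right
        split_ifs <;> first | rfl | (exfalso; omega)
  have hY : (∑ a : Fin n, ∑ b : Fin (k + 1), x (.inl a) * y (.inr (.inr b)) *
      ((if (b : ℕ) = k then (if (a : ℕ) = i ∧ i < n then (1 : ℂ) else 0) else 0)
      + (if (b : ℕ) = 0 ∧ (a : ℕ) + 1 ≤ n - k + 1 then
          ((a : ℕ) : ℂ) * (if (a : ℕ) = i ∧ i < n then (1 : ℂ) else 0) else 0)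
      + (if 1 ≤ (b : ℕ) ∧ (b : ℕ) + 1 ≤ k ∧ (a : ℕ) + 1 = n - k + (b : ℕ) + 1 then
          (if (a : ℕ) = i ∧ i < n then (1 : ℂ) else 0) else 0)))
      = ce x i * cy y k
      + (if i ≤ n - k then (i : ℂ) * ce x i * cy y 0 else ce x i * cy y (i - (n - k))) := by
    rw [Finset.sum_eq_single ⟨i, hi⟩]
    · simp only [mul_add, Finset.sum_add_distrib, hi, and_self, if_true, add_assoc]
      congr 1
      · rw [Finset.sum_eq_single ⟨k, by omega⟩]
        · simp [ce, cy, hi]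
        · intro b _ hb
          have : (b : ℕ) ≠ k := fun h => hb (Fin.ext h)
          simp [this]
        · simp
      · by_cases h : i ≤ n - k
        · rw [if_pos h, Finset.sum_eq_single ⟨0, by omega⟩, Finset.sum_eq_zero]
          · simp [ce, cy, hi, h]; ring
          · intro b _
            rw [if_neg (by omega), mul_zero]
          · intro b _ hb
            have : (b : ℕ) ≠ 0 := fun h => hb (Fin.ext h)
            simp [this]
          · simp
        · rw [if_neg h, Finset.sum_eq_zero, Finset.sum_eq_single ⟨i - (n - k), by omega⟩]
          · rw [if_pos (by simp only []; omega)]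
            simp [ce, cy, hi, (by omega : i - (n - k) < k + 1)]
          · intro b _ hb
            have : n - k + (b : ℕ) ≠ i := fun h => hb (Fin.ext (by simp; omega))
            rw [if_neg (by omega), mul_zero]
          · simp
          · intro b _
            rw [if_neg (by omega), mul_zero]
    · intro a _ ha
      have : (a : ℕ) ≠ i := fun h => ha (Fin.ext h)
      simp [this]
    · simp
  rw [hF, hY]; ring

theorem brk_leib (hk : 1 ≤ k) (hn : 2 * k + 2 ≤ n) (u v a : LR n k) :
    brkR n k (brkR n k u v) a = brkR n k (brkR n k u a) v + brkR n k u (brkR n k v a) := by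
  apply LR_ext
  · intro i hi
    by_cases h : i ≤ n - k
    · by_cases h0 : i = 0
      · subst h0
        simp only [ce_add, ce_brk _ _ _ hi hk hn, cy_brk]
        simp; ring
      · obtain ⟨j, rfl⟩ := Nat.exists_eq_succ_of_ne_zero h0
        have hj : j < n := by omega
        simp only [ce_add, ce_brk _ _ _ hi hk hn, cy_brk, Nat.succ_eq_add_one,
          Nat.add_sub_cancel, ce_brk _ _ _ hj hk hn, cf_brk _ _ 0 (by omega : 0 < k)]
        have e1 : j ≤ n - k := by omega
        have e3 : ¬ n - k < j := by omega
        have e4 : ¬ n - k < j + 1 := by omega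
        have e5 : j + 1 ≤ n - k := h
        simp only [e1, e3, e4, e5, if_true, if_false, and_true]
        by_cases h1 : 1 ≤ j
        · simp [h1]; ring
        · simp [h1]; ring
    · have hj : 0 < n := by omega
      have hl : i - (n - k) < k := by omega
      have h' : n - k < i := by omega
      simp only [ce_add, ce_brk _ _ _ hi hk hn, cy_brk, ce_brk _ _ _ hj hk hn, cf_brk _ _ _ hl]
      simp [h, h']; ring
  · intro i hi
    simp only [cf_add, cf_brk _ _ _ hi, cy_brk]; ring
  · intro i hi
    simp only [cy_add, cy_brk]; ring

theorem brk_add (x y a : LR n k) : brkR n k (x + y) a = brkR n k x a + brkR n k y a := by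
  simp [brkR, add_mul, add_smul, Finset.sum_add_distrib]
theorem brk_smul (c : ℂ) (x a : LR n k) : brkR n k (c • x) a = c • brkR n k x a := by
  simp [brkR, Finset.smul_sum, mul_assoc, mul_smul]
theorem brk_add_right (x y a : LR n k) : brkR n k a (x + y) = brkR n k a x + brkR n k a y := by
  simp [brkR, mul_add, add_smul, Finset.sum_add_distrib]
theorem brk_smul_right (c : ℂ) (x a : LR n k) : brkR n k a (c • x) = c • brkR n k a x := by
  simp [brkR, Finset.smul_sum, ← mul_smul, mul_left_comm]
theorem brk_zero_right (a : LR n k) : brkR n k a 0 = 0 := by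
  simp [brkR]
theorem brk_zero_left (a : LR n k) : brkR n k 0 a = 0 := by
  simp [brkR]
theorem brk_sum_right {ι : Type*} (s : Finset ι) (x : ι → LR n k) (a : LR n k) :
    brkR n k a (∑ j ∈ s, x j) = ∑ j ∈ s, brkR n k a (x j) := by
  classical
  induction s using Finset.induction_on with
  | empty => simp [brk_zero_right]
  | insert b s hb ih => rw [Finset.sum_insert hb, Finset.sum_insert hb, brk_add_right, ih]

/-- right multiplication -/
def Rop (n k : ℕ) (a : LR n k) : LR n k →ₗ[ℂ] LR n k where
  toFun x := brkR n k x a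
  map_add' x y := brk_add x y a
  map_smul' c x := brk_smul c x a

theorem LR_decomp (x : LR n k) : x = (∑ i ∈ Finset.range n, ce x i • Eb n k (i + 1))
    + (∑ i ∈ Finset.range k, cf x i • Fb n k (i + 1))
    + ∑ i ∈ Finset.range (k + 1), cy x i • Yb n k (i + 1) := by
  apply LR_ext
  · intro i hi
    simp [ce_add, ce_sum, ce_smul, ce_Eb, ce_Fb, ce_Yb, hi]
  · intro i hi
    simp [cf_add, cf_sum, cf_smul, cf_Eb, cf_Fb, cf_Yb, hi]
  · intro i hi
    simp [cy_add, cy_sum, cy_smul, cy_Eb, cy_Fb, cy_Yb, hi]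

theorem brk_YY (hk : 1 ≤ k) (hn : 2 * k + 2 ≤ n) (i j : ℕ) :
    brkR n k (Yb n k i) (Yb n k j) = 0 := by
  apply LR_ext
  · intro a ha
    simp [ce_brk _ _ _ ha hk hn, ce_Yb, ce_zero]
  · intro a ha
    simp [cf_brk _ _ _ ha, cf_Yb, cf_zero]
  · intro a ha
    simp [cy_brk, cy_zero]

theorem brk_FY (hk : 1 ≤ k) (hn : 2 * k + 2 ≤ n) (i j : ℕ) :
    brkR n k (Fb n k (i + 1)) (Yb n k (j + 1)) = if i = j then Fb n k (i + 1) else 0 := by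
  apply LR_ext
  · intro a ha
    simp [ce_brk _ _ _ ha hk hn, ce_Fb, ce_zero, apply_ite (ce · a)]
  · intro a ha
    simp only [cf_brk _ _ _ ha, cf_Fb, cf_zero, cf_Yb, cy_Fb, cy_Yb, apply_ite (cf · a)]
    have : a < k + 1 := by omega
    split_ifs <;> first | (exfalso; omega) | simp_all
  · intro a ha
    simp [cy_brk, cy_zero, cy_Fb, apply_ite (cy · a)]

theorem brk_YF (hk : 1 ≤ k) (hn : 2 * k + 2 ≤ n) (i : ℕ) :
    brkR n k (Yb n k (i + 1)) (Fb n k (i + 1)) = - Fb n k (i + 1) := by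
  apply LR_ext
  · intro a ha
    simp [ce_brk _ _ _ ha hk hn, ce_Fb, ce_Yb, ce_neg]
  · intro a ha
    simp only [cf_brk _ _ _ ha, cf_Fb, cf_neg, cf_Yb, cy_Fb, cy_Yb]
    have : a < k + 1 := by omega
    split_ifs <;> first | (exfalso; omega) | simp_all
  · intro a ha
    simp [cy_brk, cy_neg, cy_Fb]

theorem brk_EY (hk : 1 ≤ k) (hn : 2 * k + 2 ≤ n) (j : ℕ) :
    brkR n k (Eb n k (0 + 1)) (Yb n k (j + 1)) = if j = k then Eb n k (0 + 1) else 0 := by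
  apply LR_ext
  · intro a ha
    simp only [ce_brk _ _ _ ha hk hn, ce_Eb, ce_zero, cf_Yb, cy_Yb, apply_ite (ce · a)]
    by_cases h0 : a = 0
    · subst h0; simp
    · simp [Ne.symm h0]
  · intro a ha
    simp [cf_brk _ _ _ ha, cf_Eb, cf_Yb, cf_zero, cy_Eb, apply_ite (cf · a)]
  · intro a ha
    simp [cy_brk, cy_zero, cy_Eb, apply_ite (cy · a)]

theorem brk_EF0 (hk : 1 ≤ k) (hn : 2 * k + 2 ≤ n) (i : ℕ) (hi : i + 1 ≤ n - k) :
    brkR n k (Eb n k (i + 1)) (Fb n k (0 + 1)) = Eb n k (i + 1 + 1) := by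
  apply LR_ext
  · intro a ha
    simp only [ce_brk _ _ _ ha hk hn, ce_Eb, cy_Fb, cf_Fb]
    have h0 : 0 < k := by omega
    simp only [h0, true_and, and_true, if_true]
    split_ifs <;> first | (exfalso; omega) | simp
  · intro a ha
    simp [cf_brk _ _ _ ha, cf_Eb, cy_Fb, cy_Eb]
  · intro a ha
    simp [cy_brk, cy_Eb]

theorem brk_E0F (hk : 1 ≤ k) (hn : 2 * k + 2 ≤ n) (i : ℕ) (hi : 1 ≤ i) (hik : i < k) :
    brkR n k (Eb n k (0 + 1)) (Fb n k (i + 1)) = Eb n k (n - k + i + 1) := by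
  apply LR_ext
  · intro a ha
    simp only [ce_brk _ _ _ ha hk hn, ce_Eb, cy_Fb, cf_Fb]
    split_ifs <;> first | (exfalso; omega) | simp_all
  · intro a ha
    simp [cf_brk _ _ _ ha, cf_Eb, cy_Fb, cy_Eb]
  · intro a ha
    simp [cy_brk, cy_Eb]

theorem der_zero (hk : 1 ≤ k) (hn : 2 * k + 2 ≤ n) (D : LR n k →ₗ[ℂ] LR n k)
    (H : ∀ u v : LR n k, D (brkR n k u v) = brkR n k (D u) v + brkR n k u (D v))
    (hY : ∀ i < k, cf (D (Yb n k (i + 1))) i = 0)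
    (hF : ∀ i < k, cf (D (Fb n k (i + 1))) i = 0)
    (hE : ce (D (Eb n k (0 + 1))) 0 = 0) : D = 0 := by
  have hkk : k < k + 1 := by omega
  have y1 : ∀ i, ∀ a < n, ce (D (Yb n k (i + 1))) a = 0 := by
    intro i a ha
    have h := congrArg (ce · a) (H (Yb n k (i + 1)) (Yb n k (k + 1)))
    simp only [brk_YY hk hn, map_zero, ce_zero, ce_add, ce_brk _ _ _ ha hk hn, ce_Yb, cf_Yb,
      cy_Yb] at h
    rw [if_neg (by omega : ¬ (k = 0 ∧ 0 < k + 1))] at h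
    rw [if_neg (by omega : ¬ (k = a - (n - k) ∧ a - (n - k) < k + 1))] at h
    simpa using h.symm
  have y2 : ∀ i, ∀ a < k, cf (D (Yb n k (i + 1))) a = 0 := by
    intro i a ha
    by_cases hia : i = a
    · subst hia; exact hY i ha
    have h := congrArg (cf · a) (H (Yb n k (i + 1)) (Yb n k (a + 1)))
    simp only [brk_YY hk hn, map_zero, cf_zero, cf_add, cf_brk _ _ _ ha, cf_Yb, cy_Yb] at h
    rw [if_neg (by omega : ¬ (i = a ∧ a < k + 1)), if_pos ⟨trivial, by omega⟩] at h
    simpa using h.symm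
  have f0 : ∀ i < k, D (Fb n k (i + 1)) = 0 := by
    intro i hi
    have h := H (Yb n k (i + 1)) (Fb n k (i + 1))
    rw [brk_YF hk hn, map_neg] at h
    apply LR_ext
    · intro a ha
      have h := congrArg (ce · a) h
      simp only [ce_neg, ce_add, ce_brk _ _ _ ha hk hn, ce_Yb, y1 i a ha, y1 i 0 (by omega),
        y1 i (a - 1) (by omega)] at h
      simpa [ce_zero] using h
    · intro a ha
      by_cases hia : i = a
      · subst hia; rw [hF i ha, cf_zero]
      have h := congrArg (cf · a) h
      simp only [cf_neg, cf_add, cf_brk _ _ _ ha, cf_Yb, cy_Yb, cf_Fb, cy_Fb] at h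
      simpa [hia, cf_zero] using h
    · intro a ha
      have h := congrArg (cy · a) h
      simp only [cy_neg, cy_add, cy_brk] at h
      simpa [cy_zero] using h
  have y3 : ∀ j, ∀ i < k, cy (D (Yb n k (j + 1))) i = 0 := by
    intro j i hi
    have h := congrArg (cf · i) (H (Fb n k (i + 1)) (Yb n k (j + 1)))
    rw [brk_FY hk hn, f0 i hi, apply_ite D, f0 i hi, map_zero, ite_self] at h
    simp only [cf_zero, cf_add, cf_brk _ _ _ hi, cy_zero, cf_Fb, cy_Fb] at h
    simpa [hi] using h.symm
  have y4 : ∀ j ≤ k, cy (D (Yb n k (j + 1))) k = 0 := by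
    intro j hj
    have h := congrArg (ce · 0) (H (Eb n k (0 + 1)) (Yb n k (j + 1)))
    have hn0 : 0 < n := by omega
    rw [brk_EY hk hn] at h
    simp only [ce_add, ce_brk _ _ _ hn0 hk hn, hE, ce_Eb, apply_ite D, apply_ite (ce · 0), map_zero,
      ce_zero] at h
    simpa [hn0] using h.symm
  have y0 : ∀ i ≤ k, D (Yb n k (i + 1)) = 0 := by
    intro i hi
    apply LR_ext
    · intro a ha; rw [y1 i a ha, ce_zero]
    · intro a ha; rw [y2 i a ha, cf_zero]
    · intro a ha
      rw [cy_zero]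
      by_cases h : a = k
      · subst h; exact y4 i hi
      · exact y3 i a (by omega)
  have e0 : D (Eb n k (0 + 1)) = 0 := by
    have hh : ∀ j ≤ k, D (if j = k then Eb n k (0 + 1) else 0)
        = brkR n k (D (Eb n k (0 + 1))) (Yb n k (j + 1)) := by
      intro j hj
      have h := H (Eb n k (0 + 1)) (Yb n k (j + 1))
      rwa [brk_EY hk hn, y0 j hj, brk_zero_right, add_zero] at h
    have hk0 := hh k le_rfl
    rw [if_pos rfl] at hk0
    apply LR_ext
    · intro a ha
      rw [ce_zero]
      by_cases h0 : a = 0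
      · subst h0; exact hE
      by_cases h1 : a ≤ n - k
      · have h := congrArg (ce · a) (hh 0 (by omega))
        simp only [if_neg (by omega : ¬ 0 = k), map_zero, ce_zero, ce_brk _ _ _ ha hk hn, cf_Yb,
          cy_Yb] at h
        have hk0 : ¬ 0 = k := by omega
        simpa [h1, h0, hk0] using h.symm
      · have h := congrArg (ce · a) (hh (a - (n - k)) (by omega))
        simp only [if_neg (by omega : ¬ a - (n - k) = k), map_zero, ce_zero,
          ce_brk _ _ _ ha hk hn, cf_Yb, cy_Yb] at h
        rw [if_neg (by omega), if_neg h1, if_pos ⟨trivial, by omega⟩] at h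
        simpa using h.symm
    · intro a ha
      have h := congrArg (cf · a) hk0
      simp only [cf_brk _ _ _ ha, cf_Yb, cy_Yb] at h
      rw [if_neg (by omega)] at h
      simpa [cf_zero] using h
    · intro a ha
      rw [hk0, cy_brk, cy_zero]
  have e1 : ∀ i ≤ n - k, D (Eb n k (i + 1)) = 0 := by
    intro i
    induction i with
    | zero => intro _; exact e0
    | succ i ih =>
      intro hi
      rw [← brk_EF0 hk hn i hi, H, ih (by omega), f0 0 (by omega), brk_zero_left, brk_zero_right,
        add_zero]
  have e2 : ∀ i < n, D (Eb n k (i + 1)) = 0 := by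
    intro i hi
    by_cases h : i ≤ n - k
    · exact e1 i h
    · have h3 := H (Eb n k (0 + 1)) (Fb n k (i - (n - k) + 1))
      rw [brk_E0F hk hn _ (by omega) (by omega), e0, f0 _ (by omega), brk_zero_left, brk_zero_right,
        add_zero, (by omega : n - k + (i - (n - k)) = i)] at h3
      exact h3
  refine LinearMap.ext fun x => ?_
  rw [LR_decomp x]
  simp only [map_add, map_sum, map_smul, LinearMap.zero_apply]
  rw [Finset.sum_eq_zero, Finset.sum_eq_zero, Finset.sum_eq_zero]
  · simp
  · intro i hi
    rw [y0 i (by have := Finset.mem_range.1 hi; omega), smul_zero]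
  · intro i hi
    rw [f0 i (Finset.mem_range.1 hi), smul_zero]
  · intro i hi
    rw [e2 i (Finset.mem_range.1 hi), smul_zero]

theorem center_zero (hk : 1 ≤ k) (hn : 2 * k + 2 ≤ n) (z : LR n k)
    (h : ∀ u : LR n k, brkR n k z u = 0 ∧ brkR n k u z = 0) : z = 0 := by
  have c1 : ∀ i < k, cy z i = 0 := by
    intro i hi
    have := congrArg (cf · i) (h (Fb n k (i + 1))).1
    simpa [cf_brk _ _ _ hi, cf_Fb, cy_Fb, cf_zero, hi] using this
  have c2 : cy z k = 0 := by
    have h0 : 0 < n := by omega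
    have := congrArg (ce · 0) (h (Eb n k (0 + 1))).2
    simp only [ce_brk _ _ _ h0 hk hn, ce_Eb, ce_zero] at this
    simpa [h0] using this
  apply LR_ext
  · intro a ha
    have := congrArg (ce · a) (h (Yb n k (k + 1))).1
    simp only [ce_brk _ _ _ ha hk hn, cf_Yb, cy_Yb, ce_zero] at this
    rw [if_neg (by omega : ¬ (k = 0 ∧ 0 < k + 1))] at this
    rw [if_neg (by omega : ¬ (k = a - (n - k) ∧ a - (n - k) < k + 1))] at this
    simpa [ce_zero] using this
  · intro a ha
    have := congrArg (cf · a) (h (Yb n k (a + 1))).1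
    simpa [cf_brk _ _ _ ha, cf_Yb, cy_Yb, cf_zero, (by omega : a < k + 1)] using this
  · intro a ha
    rw [cy_zero]
    by_cases hak : a = k
    · subst hak; exact c2
    · exact c1 a (by omega)

end coords

/-- The solvable Leibniz algebra `R_n` is complete: its center is zero and
every derivation is inner (a right multiplication operator `R_a`); in fact
every derivation is a linear combination of `R_{f₁},…,R_{f_k},R_{y₁},…,R_{y_{k+1}}`. -/
theorem Rn_complete (n k : ℕ) (hk : 1 ≤ k) (hn : 2 * k + 2 ≤ n) :
    (∀ z : LR n k, (∀ u : LR n k, brkR n k z u = 0 ∧ brkR n k u z = 0) → z = 0) ∧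
    (∀ d : LR n k →ₗ[ℂ] LR n k,
      (∀ u v : LR n k, d (brkR n k u v) = brkR n k (d u) v + brkR n k u (d v)) →
      (∃ a : LR n k, ∀ y : LR n k, d y = brkR n k y a) ∧
      (∃ b c : ℕ → ℂ, ∀ y : LR n k,
        d y = (∑ i ∈ Finset.Icc 1 k, b i • brkR n k y (Fb n k i))
            + ∑ i ∈ Finset.Icc 1 (k + 1), c i • brkR n k y (Yb n k i))) := by
  refine ⟨fun z hz => center_zero hk hn z hz, fun d hd => ?_⟩
  let b : ℕ → ℂ := fun i => - cf (d (Yb n k i)) (i - 1)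
  let c : ℕ → ℂ := fun i => if i = k + 1 then ce (d (Eb n k (0 + 1))) 0
    else cf (d (Fb n k i)) (i - 1)
  let a : LR n k := (∑ i ∈ Finset.Icc 1 k, b i • Fb n k i)
    + ∑ i ∈ Finset.Icc 1 (k + 1), c i • Yb n k i
  have ha : a = (∑ i ∈ Finset.range k, b (i + 1) • Fb n k (i + 1))
      + ∑ i ∈ Finset.range (k + 1), c (i + 1) • Yb n k (i + 1) := by
    have : ∀ (N : ℕ) (g : ℕ → LR n k),
        ∑ i ∈ Finset.Icc 1 N, g i = ∑ i ∈ Finset.range N, g (i + 1) := by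
      intro N g
      induction N with
      | zero => simp
      | succ N ih => rw [Finset.sum_Icc_succ_top (by omega), ih, Finset.sum_range_succ]
    simp only [a, this]
  have af : ∀ i < k, cf a i = b (i + 1) := by
    intro i hi
    rw [ha]
    simp [cf_add, cf_sum, cf_smul, cf_Fb, cf_Yb, hi]
  have ay : ∀ i < k + 1, cy a i = c (i + 1) := by
    intro i hi
    rw [ha]
    simp [cy_add, cy_sum, cy_smul, cy_Fb, cy_Yb, hi]
  have hD : d - Rop n k a = 0 := by
    apply der_zero hk hn
    · intro u v
      have := brk_leib hk hn u v a
      have e : ∀ x, (d - Rop n k a) x = d x - brkR n k x a := fun x => rfl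
      have s1 : ∀ x y w : LR n k, brkR n k (x - y) w = brkR n k x w - brkR n k y w := by
        intro x y w
        rw [sub_eq_add_neg, ← neg_one_smul ℂ y, brk_add, brk_smul, neg_one_smul, sub_eq_add_neg]
      have s2 : ∀ x y w : LR n k, brkR n k w (x - y) = brkR n k w x - brkR n k w y := by
        intro x y w
        rw [sub_eq_add_neg, ← neg_one_smul ℂ y, brk_add_right, brk_smul_right, neg_one_smul,
          sub_eq_add_neg]
      rw [e, e, e, hd, this, s1, s2]
      abel
    · intro i hi
      change cf (d (Yb n k (i + 1)) - brkR n k (Yb n k (i + 1)) a) i = 0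
      rw [cf_sub, cf_brk _ _ _ hi, af i hi, cf_Yb, cy_Yb, if_pos ⟨rfl, by omega⟩]
      simp [b]
    · intro i hi
      change cf (d (Fb n k (i + 1)) - brkR n k (Fb n k (i + 1)) a) i = 0
      rw [cf_sub, cf_brk _ _ _ hi, ay i (by omega), cf_Fb, cy_Fb, if_pos ⟨rfl, by omega⟩]
      have hik : ¬ i = k := by omega
      simp [c, hik]
    · change ce (d (Eb n k (0 + 1)) - brkR n k (Eb n k (0 + 1)) a) 0 = 0
      have h0 : 0 < n := by omega
      rw [ce_sub, ce_brk _ _ _ h0 hk hn, ay k (by omega), ce_Eb, if_pos ⟨rfl, h0⟩]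
      simp [c]
  have hda : ∀ y, d y = brkR n k y a := by
    intro y
    have := LinearMap.congr_fun hD y
    exact sub_eq_zero.1 this
  refine ⟨⟨a, hda⟩, b, c, fun y => ?_⟩
  rw [hda y]
  simp only [a, brk_add_right, brk_sum_right, brk_smul_right]

end
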